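/- Let n ≥ 2 and let x_1,…,x_n be pairwise distinct strictly positive reals with ∑_k x_k = 1. Then for every q with 1 ≤ q ≤ n−1, (−1)^{n−q+1} · ∑_{k=1}^n (x_k^{q−1} · ln x_k) / P_k ≥ n^{n−q} / (q · C(n−1, q)), where P_k = ∏_{i≠k}(x_k − x_i) and C(n−1,q) is the binomial coefficient. (This is the lower bound ∂S/∂s_{n−q+1} ≥ n^{n−q}/(q·C(n−1,q)) for the derivatives of the Shannon entropy with respect to the elementary symmetric polynomials.) -/

import Mathlib

/-- `ND m f g`: on the positive reals, `g` is the `m`-th derivative of `f`. -/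
def ND : ℕ → (ℝ → ℝ) → (ℝ → ℝ) → Prop
  | 0, f, g => ∀ t, 0 < t → f t = g t
  | m + 1, f, g => ∃ fd : ℝ → ℝ, (∀ t, 0 < t → HasDerivAt f (fd t) t) ∧ ND m fd g

theorem ND.congr_left {m : ℕ} {f f₁ g : ℝ → ℝ} (h : ND m f g) (he : ∀ t, 0 < t → f₁ t = f t) :
    ND m f₁ g := by
  cases m with
  | zero => exact fun t ht => (he t ht).trans (h t ht)
  | succ m =>
    obtain ⟨fd, h1, h2⟩ := h
    refine ⟨fd, fun t ht => (h1 t ht).congr_of_eventuallyEq ?_, h2⟩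
    filter_upwards [lt_mem_nhds ht] with s hs using he s hs

theorem ND.comp {a b : ℕ} {f g h : ℝ → ℝ} (h1 : ND a f g) (h2 : ND b g h) : ND (b + a) f h := by
  induction a generalizing f with
  | zero => exact h2.congr_left h1
  | succ a ih =>
    obtain ⟨fd, h3, h4⟩ := h1
    exact ⟨fd, h3, ih h4⟩

theorem ND.congr_right {m : ℕ} {f g g₁ : ℝ → ℝ} (h : ND m f g) (he : ∀ t, 0 < t → g t = g₁ t) :
    ND m f g₁ := by
  have := h.comp (b := 0) (h := g₁) he
  simpa using this

theorem ND.add {m : ℕ} {f g f₁ g₁ : ℝ → ℝ} (h : ND m f g) (h1 : ND m f₁ g₁) :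
    ND m (fun t => f t + f₁ t) (fun t => g t + g₁ t) := by
  induction m generalizing f f₁ with
  | zero => exact fun t ht => congrArg₂ (· + ·) (h t ht) (h1 t ht)
  | succ m ih =>
    obtain ⟨fd, h3, h4⟩ := h
    obtain ⟨fe, h5, h6⟩ := h1
    exact ⟨_, fun t ht => (h3 t ht).add (h5 t ht), ih h4 h6⟩

theorem ND.const_mul {m : ℕ} {f g : ℝ → ℝ} (c : ℝ) (h : ND m f g) :
    ND m (fun t => c * f t) (fun t => c * g t) := by
  induction m generalizing f with
  | zero => exact fun t ht => congrArg (c * ·) (h t ht)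
  | succ m ih =>
    obtain ⟨fd, h3, h4⟩ := h
    exact ⟨_, fun t ht => (h3 t ht).const_mul c, ih h4⟩

theorem ND.poly (m : ℕ) (p : Polynomial ℝ) :
    ND m (fun t => p.eval t) (fun t => (Polynomial.derivative^[m] p).eval t) := by
  induction m generalizing p with
  | zero => exact fun t ht => rfl
  | succ m ih => exact ⟨_, fun t ht => p.hasDerivAt t, ih _⟩

theorem ND.inv (r : ℕ) :
    ND r (fun t => t⁻¹) (fun t => (-1) ^ r * (r.factorial : ℝ) * (t⁻¹) ^ (r + 1)) := by
  induction r with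
  | zero => intro t ht; simp
  | succ r ih =>
    rw [add_comm r 1]
    refine ih.comp (b := 1) ⟨_, fun t ht => ?_, fun t ht => rfl⟩
    have := (((hasDerivAt_inv ht.ne').pow (r + 1)).const_mul ((-1) ^ r * (r.factorial : ℝ)))
    refine this.congr_deriv ?_
    rw [add_comm 1 r, Nat.factorial_succ]
    push_cast
    rw [← inv_pow]
    ring

theorem iterate_derivative_of_natDegree_le (m : ℕ) (p : Polynomial ℝ) (hp : p.natDegree ≤ m) :
    Polynomial.derivative^[m] p = Polynomial.C ((m.factorial : ℝ) * p.coeff m) := by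
  ext k
  rw [Polynomial.coeff_iterate_derivative, Polynomial.coeff_C]
  split_ifs with h
  · subst h; simp [Nat.descFactorial_self]
  · rw [Polynomial.coeff_eq_zero_of_natDegree_lt (by omega)]; simp

theorem ND.tlog (j : ℕ) :
    ND (j + 1) (fun t => t ^ j * Real.log t) (fun t => (j.factorial : ℝ) * t⁻¹) := by
  induction j with
  | zero =>
    refine ⟨fun t => t⁻¹, fun t ht => ?_, fun t ht => by simp⟩
    simpa using Real.hasDerivAt_log ht.ne'
  | succ j ih =>
    have hp := ND.poly (j + 1) (Polynomial.X ^ j : Polynomial ℝ)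
    refine ⟨_, fun t ht => ?_, ((ih.const_mul ((j : ℝ) + 1)).add hp).congr_right ?_⟩
    · refine ((hasDerivAt_pow (j + 1) t).mul (Real.hasDerivAt_log ht.ne')).congr_deriv ?_
      simp
      field_simp
      ring
    · intro t ht
      rw [iterate_derivative_of_natDegree_le _ _ (by simp)]
      simp [Nat.factorial_succ, Polynomial.coeff_X_pow]
      ring

theorem ND.rolle {m : ℕ} {f g : ℝ → ℝ} (h : ND m f g) (y : Fin (m + 1) → ℝ) (hy : StrictMono y)
    (hpos : ∀ i, 0 < y i) (hz : ∀ i, f (y i) = 0) : ∃ ξ, 0 < ξ ∧ g ξ = 0 := by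
  induction m generalizing f with
  | zero => exact ⟨y 0, hpos 0, (h _ (hpos 0)).symm.trans (hz 0)⟩
  | succ m ih =>
    obtain ⟨fd, h1, h2⟩ := h
    have key : ∀ i : Fin (m + 1), ∃ c ∈ Set.Ioo (y i.castSucc) (y i.succ), fd c = 0 := by
      intro i
      refine exists_hasDerivAt_eq_zero (f := f) (hy i.castSucc_lt_succ) ?_ (by rw [hz, hz]) ?_
      · intro t ht
        exact (h1 t ((hpos _).trans_le ht.1)).continuousAt.continuousWithinAt
      · intro t ht
        exact h1 t ((hpos _).trans ht.1)
    choose c hc hc0 using key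
    refine ih h2 c ?_ (fun i => (hpos _).trans (hc i).1) hc0
    intro i j hij
    calc c i < y i.succ := (hc i).2
      _ ≤ y j.castSucc := hy.monotone (by
        rw [Fin.le_def]; simp; exact hij)
      _ < c j := (hc j).1

theorem divdiff_pow (n : ℕ) (hn : 2 ≤ n) (x : Fin n → ℝ) (hdist : Function.Injective x) :
    ∑ k, x k ^ n / ∏ i ∈ Finset.univ.erase k, (x k - x i) = ∑ k, x k := by
  have hdeg : (Polynomial.X ^ n - Lagrange.nodal Finset.univ x : Polynomial ℝ).degree
      < (Finset.univ : Finset (Fin n)).card := by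
    have hm := Lagrange.nodal_monic (s := Finset.univ) (v := x)
    have := Polynomial.degree_sub_lt_right (p := (Polynomial.X ^ n : Polynomial ℝ))
      (q := Lagrange.nodal Finset.univ x) (by simp [Lagrange.degree_nodal]) hm.ne_zero
      (by rw [hm.leadingCoeff]; simp)
    rwa [Lagrange.degree_nodal] at this
  have h := Lagrange.coeff_eq_sum (s := Finset.univ) (v := x) hdist.injOn hdeg
  have h2 := Polynomial.prod_X_sub_C_coeff_card_pred (Finset.univ : Finset (Fin n)) x
    (by simp; omega)
  rw [Polynomial.coeff_sub, Lagrange.nodal_eq, h2, Polynomial.coeff_X_pow] at h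
  rw [if_neg (by simp; omega)] at h
  simp only [zero_sub, neg_neg] at h
  rw [h]
  refine Finset.sum_congr rfl fun k _ => ?_
  rw [← Lagrange.nodal_eq]
  simp [Lagrange.eval_nodal_at_node]

theorem bern (r : ℕ) (u : ℝ) (hu : 0 < u) : 1 ≤ (u⁻¹) ^ r + r * u - r := by
  have hi : 0 < u⁻¹ := inv_pos.2 hu
  have h := one_add_mul_le_pow (a := u⁻¹ - 1) (by linarith) r
  have h2 : 2 ≤ u + u⁻¹ := by
    have : u * u⁻¹ = 1 := mul_inv_cancel₀ hu.ne'
    nlinarith [sq_nonneg (u - 1), sq_nonneg (u - u⁻¹)]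
  have h3 : (r : ℝ) * 2 ≤ r * (u + u⁻¹) := by gcongr
  have h4 : 1 + (u⁻¹ - 1) = u⁻¹ := by ring
  rw [h4] at h
  linarith

/-- Mean value theorem for divided differences. -/
theorem divdiff_mean (n : ℕ) (hn : 2 ≤ n) (x : Fin n → ℝ)
    (hpos : ∀ k, 0 < x k) (hdist : Function.Injective x) (f g : ℝ → ℝ) (h : ND (n - 1) f g) :
    ∃ ξ, 0 < ξ ∧ g ξ = ((n - 1).factorial : ℝ) *
      ∑ k, f (x k) / ∏ i ∈ Finset.univ.erase k, (x k - x i) := by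
  obtain ⟨m, rfl⟩ : ∃ m, n = m + 1 := ⟨n - 1, by omega⟩
  simp only [Nat.add_sub_cancel] at *
  set p := Lagrange.interpolate Finset.univ x (fun k => f (x k)) with hp
  have hdeg : p.degree < (Finset.univ : Finset (Fin (m + 1))).card :=
    Lagrange.degree_interpolate_lt _ hdist.injOn
  have hev : ∀ k, p.eval (x k) = f (x k) := fun k =>
    Lagrange.eval_interpolate_at_node _ hdist.injOn (Finset.mem_univ k)
  have hc := Lagrange.coeff_eq_sum (s := Finset.univ) (v := x) hdist.injOn hdeg
  simp only [hev, Finset.card_univ, Fintype.card_fin, Nat.add_sub_cancel] at hc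
  have hnd : p.natDegree ≤ m := by
    rw [Polynomial.natDegree_le_iff_coeff_eq_zero]
    rw [Finset.card_univ, Fintype.card_fin] at hdeg
    exact fun k hk => (Polynomial.degree_lt_iff_coeff_zero _ _).1 hdeg k hk
  have hN := h.add ((ND.poly m p).const_mul (-1))
  have hcard : (Finset.univ.image x).card = m + 1 := by
    rw [Finset.card_image_of_injective _ hdist]; simp
  have hmem : ∀ i, ∃ k, x k = (Finset.univ.image x).orderEmbOfFin hcard i := by
    intro i
    have := Finset.orderEmbOfFin_mem (Finset.univ.image x) hcard i
    obtain ⟨k, -, hk⟩ := Finset.mem_image.1 this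
    exact ⟨k, hk⟩
  obtain ⟨ξ, hξ, h0⟩ := hN.rolle ((Finset.univ.image x).orderEmbOfFin hcard)
    (OrderEmbedding.strictMono _)
    (fun i => by obtain ⟨k, hk⟩ := hmem i; rw [← hk]; exact hpos k)
    (fun i => by obtain ⟨k, hk⟩ := hmem i; rw [← hk, hev]; ring)
  refine ⟨ξ, hξ, ?_⟩
  rw [iterate_derivative_of_natDegree_le _ _ hnd, Polynomial.eval_C, hc] at h0
  linarith

/-- The lower bound ∂S/∂s_{n−q+1} ≥ n^{n−q}/(q·C(n−1,q)) for the derivatives of the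
Shannon entropy with respect to the elementary symmetric polynomials. -/
theorem stmt_2 (n : ℕ) (hn : 2 ≤ n) (x : Fin n → ℝ)
    (hpos : ∀ k, 0 < x k) (hdist : Function.Injective x)
    (hsum : ∑ k, x k = 1)
    (q : ℕ) (hq1 : 1 ≤ q) (hqn : q ≤ n - 1) :
    (n : ℝ) ^ (n - q) / (q * ((n - 1).choose q)) ≤
      (-1 : ℝ) ^ (n - q + 1) * ∑ k, (x k ^ (q - 1) * Real.log (x k)) /
        ∏ i ∈ Finset.univ.erase k, (x k - x i) := by
  rename' n => N
  obtain ⟨j, rfl⟩ : ∃ j, q = j + 1 := ⟨q - 1, by omega⟩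
  obtain ⟨s, hN⟩ : ∃ s, N = s + 1 + (j + 1) := ⟨N - (j + 1) - 1, by omega⟩
  have e1 : N - (j + 1) = s + 1 := by omega
  have e2 : N - 1 = s + (j + 1) := by omega
  rw [e1, e2, Nat.add_sub_cancel]
  have hlog : ND (s + (j + 1)) (fun t => t ^ j * Real.log t) (fun t => (j.factorial : ℝ) *
      ((-1) ^ s * (s.factorial : ℝ) * (t⁻¹) ^ (s + 1))) :=
    (ND.tlog j).comp ((ND.inv s).const_mul _)
  have hX := ND.poly (s + (j + 1)) (Polynomial.X ^ N : Polynomial ℝ)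
  have hXd : ND (s + (j + 1)) (fun t => t ^ N)
      (fun t => (N.factorial : ℝ) * t) := by
    refine (hX.congr_left fun t ht => by simp).congr_right fun t ht => ?_
    rw [Polynomial.iterate_derivative_X_pow_eq_C_mul]
    have e3 : N - (s + (j + 1)) = 1 := by omega
    have e4 := Nat.factorial_mul_descFactorial (n := N) (k := s + (j + 1)) (by omega)
    rw [e3, Nat.factorial_one, one_mul] at e4
    rw [e3, e4]
    simp
  obtain ⟨M, hM⟩ : ∃ M, M = s + (j + 1) := ⟨_, rfl⟩
  have hNM : N = M + 1 := by omega
  have hD := (divdiff_pow N hn x hdist).trans hsum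
  set L := ∑ k, (x k ^ j * Real.log (x k)) / ∏ i ∈ Finset.univ.erase k, (x k - x i) with hL
  set K : ℝ := (j.factorial : ℝ) * s.factorial with hK
  have hKpos : 0 < K := by positivity
  -- the coefficient of the tangent correction
  set a : ℝ := - (K * (s + 1) * (N : ℝ) ^ (s + 2)) / N.factorial with ha
  have hg := (hlog.const_mul ((-1) ^ (s + 1 + 1))).add (hXd.const_mul (-a))
  rw [← e2] at hg
  obtain ⟨ξ, hξ, h⟩ := divdiff_mean N hn x hpos hdist _ _ hg
  have hsplit : ∑ k, ((-1) ^ (s + 1 + 1) * (x k ^ j * Real.log (x k)) + -a * x k ^ N) /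
      ∏ i ∈ Finset.univ.erase k, (x k - x i) = (-1) ^ (s + 1 + 1) * L - a := by
    simp only [add_div, mul_div_assoc, Finset.sum_add_distrib, ← Finset.mul_sum]
    rw [hD, hL]
    simp only [mul_div_assoc]
    ring
  rw [hsplit] at h
  have hsgn : ((-1 : ℝ)) ^ (s + 1 + 1) * ((j.factorial : ℝ) *
      ((-1) ^ s * (s.factorial : ℝ) * (ξ⁻¹) ^ (s + 1))) = K * (ξ⁻¹) ^ (s + 1) := by
    have : ((-1 : ℝ)) ^ (s + 1 + 1) * (-1) ^ s = 1 := by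
      rw [← pow_add]; exact Even.neg_one_pow ⟨s + 1, by ring⟩
    calc _ = (((-1 : ℝ)) ^ (s + 1 + 1) * (-1) ^ s) * ((j.factorial : ℝ) * s.factorial *
          (ξ⁻¹) ^ (s + 1)) := by ring
      _ = _ := by rw [this, one_mul]
  rw [hsgn, e2, ← hM] at h
  rw [← hM]
  have hNpos : (0 : ℝ) < N := by rw [hNM]; positivity
  have hb := bern (s + 1) (N * ξ) (by positivity)
  have hfac : (N.factorial : ℝ) = N * M.factorial := by
    rw [hNM, Nat.factorial_succ]; push_cast; ring
  have hMpos : (0 : ℝ) < M.factorial := by positivity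
  have haN : a * N.factorial = - (K * (s + 1) * (N : ℝ) ^ (s + 2)) := by
    rw [ha]; field_simp
  have haM : a * M.factorial = - (K * (s + 1) * (N : ℝ) ^ (s + 1)) := by
    have : (a * M.factorial) * N = (- (K * (s + 1) * (N : ℝ) ^ (s + 1))) * N := by
      rw [hfac] at haN; linear_combination haN
    exact mul_right_cancel₀ hNpos.ne' this
  have hchoose : (((j + 1 : ℕ) : ℝ) * (M.choose (j + 1))) * K = M.factorial := by
    have := Nat.add_choose_mul_factorial_mul_factorial s (j + 1)
    rw [hM, ← this, hK, Nat.factorial_succ]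
    push_cast; ring
  have hcpos : (0 : ℝ) < ((j + 1 : ℕ) : ℝ) * (M.choose (j + 1)) := by
    by_contra hcon
    nlinarith
  rw [div_le_iff₀ hcpos]
  have hmain : K * (N : ℝ) ^ (s + 1) ≤ M.factorial * ((-1) ^ (s + 1 + 1) * L) := by
    have h5 : M.factorial * ((-1) ^ (s + 1 + 1) * L) =
        K * ((N : ℝ) ^ (s + 1) * (((N * ξ)⁻¹) ^ (s + 1) + ((s + 1 : ℕ) : ℝ) * (N * ξ)
          - ((s + 1 : ℕ) : ℝ))) := by
      have h6 : (N : ℝ) ^ (s + 1) * ((N * ξ)⁻¹) ^ (s + 1) = (ξ⁻¹) ^ (s + 1) := by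
        rw [← mul_pow]; congr 1; field_simp
      push_cast
      linear_combination (-1) * h + haM - ξ * haN - K * h6
    rw [h5]
    gcongr
    exact le_mul_of_one_le_right (by positivity) hb
  rw [← hchoose] at hmain
  refine le_of_mul_le_mul_left ?_ hKpos
  linarith
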